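/- For every u ∈ C_0^∞(ℝ³;ℝ³) with spherical-mean decomposition u = ū + v, one has ∫_{ℝ³}(Lu)·(Φu) dx = (1/2)|u(0)|² + B*(u,u), where (with summation over repeated indices 1..3) B*(u,u) = (α/2)∫_{ℝ³}(v_j ∂_k v_k − v_k ∂_k v_j) ∂_i Φ_ij dx + ∫_{ℝ³}(∂_k u_i ∂_k u_j + α ∂_k u_k ∂_i u_j) Φ_ij dx; i.e. in the first (antisymmetric) integral of the bilinear form the full field u may be replaced by its mean-free part v. -/

import Mathlib

/-!
Let `τₖᵢ = ∂ₖuᵢ + α δₖᵢ div u`, so that `Lu = -∂ₖτₖ`. The field `τₖᵢ Φᵢⱼ uⱼ` is `O(|x|⁻¹)` with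
first derivatives `O(|x|⁻²)`, hence its divergence integrates to zero over `ℝ³`, and
`∫ (Lu)·(Φu) = ∫ τₖᵢ ∂ₖΦᵢⱼ uⱼ + ∫ τₖᵢ Φᵢⱼ ∂ₖuⱼ`. The second integral is the gradient part of `B*`.
In the first one, `τₖᵢ uⱼ` can be replaced, by symmetry in the contraction with `∂ₖΦᵢⱼ`, by half the
tensor `τ` of the columns of the symmetric matrix `S = u ⊗ u`, up to an expression antisymmetric in
`u`, which gives the first integral of `B*` at `u`.

It remains to see that the tensors `τ` of the columns of a symmetric matrix field `S` pair with `∂Φ`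
to `tr S(0)`. For symmetric `S` the tangential derivatives drop out: with `β = α/(α+2)` the pairing
is `-c_α r⁻² ∂ᵣSᵢⱼ (δᵢⱼ + 3β ωᵢωⱼ)`, so in polar coordinates one integrates along rays and is left
with the moments `∫_{S²} ωᵢωⱼ dσ = (4π/3) δᵢⱼ`; the constant is `4π c_α (1 + β) = 1`.

Finally, `∂ᵢΦᵢⱼ` is a multiple of `xⱼ|x|⁻³`. As `∂ₖūⱼ` is radial, replacing `v + ū` by `v` in the
antisymmetric density costs a multiple of the divergence of `xⱼ|x|⁻³ (ūⱼ v - vⱼ ū)`. Since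
`ū(0) = u(0)`, one has `v = O(|x|)`, so this field is `O(|x|⁻¹)` and its divergence integrates to
zero.
-/

open MeasureTheory Metric Real Filter

noncomputable section

/-- `ℝ³` as Euclidean space. -/
abbrev E3 : Type := EuclideanSpace ℝ (Fin 3)

/-- Partial derivative `∂ᵢ f` on `ℝ³`. -/
def pd (i : Fin 3) (f : E3 → ℝ) (x : E3) : ℝ :=
  fderiv ℝ f x (EuclideanSpace.single i 1)

/-- Laplacian on `ℝ³`. -/
def lap (f : E3 → ℝ) (x : E3) : ℝ := ∑ i, pd i (pd i f) x

/-- Divergence of a vector field on `ℝ³`. -/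
def divg (u : E3 → Fin 3 → ℝ) (x : E3) : ℝ := ∑ k, pd k (fun y => u y k) x

/-- The 3D Lamé operator `(Lu)ᵢ = -Δuᵢ - α ∂ᵢ (div u)`. -/
def lame (α : ℝ) (u : E3 → Fin 3 → ℝ) (x : E3) (i : Fin 3) : ℝ :=
  - lap (fun y => u y i) x - α * pd i (divg u) x

/-- The constant `c_α = (α+2)/(8π(α+1))`. -/
def cA (α : ℝ) : ℝ := (α + 2) / (8 * Real.pi * (α + 1))

/-- The fundamental matrix `Φ` of the 3D Lamé system:
`Φ_ij(x) = c_α |x|⁻¹ (δ_ij + (α/(α+2)) xᵢxⱼ/|x|²)`. -/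
def Phi (α : ℝ) (x : E3) (i j : Fin 3) : ℝ :=
  cA α * ‖x‖⁻¹ * ((if i = j then (1 : ℝ) else 0) + (α / (α + 2)) * (x i * x j) / ‖x‖ ^ 2)

/-- `u ∈ C₀^∞(U; ℝ³)`: smooth, compactly supported, with support inside `U`. -/
def IsTestOn (U : Set E3) (u : E3 → Fin 3 → ℝ) : Prop :=
  ContDiff ℝ (⊤ : ℕ∞) u ∧ HasCompactSupport u ∧ tsupport u ⊆ U

/-- `∫_{ℝ³} (Lu)·(Φ(·-y) u) dx`. -/
def lameEnergy (α : ℝ) (u : E3 → Fin 3 → ℝ) (y : E3) : ℝ :=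
  ∫ x : E3, ∑ i, ∑ j, lame α u x i * Phi α (x - y) i j * u x j

/-- The surface measure on the unit sphere `S² ⊂ ℝ³` (total mass `4π`). -/
def sphMeas : Measure (sphere (0 : E3) 1) := volume.toSphere

/-- `∫_{S²} f(rω) dσ(ω)`. -/
def sphInt (f : E3 → ℝ) (r : ℝ) : ℝ := ∫ ω : sphere (0 : E3) 1, f (r • (ω : E3)) ∂sphMeas

/-- `(ū, v)` is the spherical-mean decomposition of `u`:
`ūᵢ(r) = (1/(4π)) ∫_{S²} uᵢ(rω) dσ(ω)` and `uᵢ(x) = ūᵢ(|x|) + vᵢ(x)`. -/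
def IsSphericalMeanDecomp (u : E3 → Fin 3 → ℝ) (ub : Fin 3 → ℝ → ℝ)
    (v : E3 → Fin 3 → ℝ) : Prop :=
  (∀ i r, ub i r = (1 / (4 * Real.pi)) * sphInt (fun x => u x i) r) ∧
  (∀ x i, u x i = ub i ‖x‖ + v x i)

open Module Set Topology Asymptotics

section LineDeriv

variable {E F : Type*} [NormedAddCommGroup E] [NormedSpace ℝ E]
  [NormedAddCommGroup F] [NormedSpace ℝ F]

lemma hasDerivAt_add_smul_of_hasLineDerivAt {f : E → F} {f' : F} {x v : E} {t : ℝ}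
    (hf : HasLineDerivAt ℝ f f' (x + t • v) v) :
    HasDerivAt (fun s : ℝ ↦ f (x + s • v)) f' t := by
  have h : HasDerivAt (fun s : ℝ ↦ f (x + t • v + s • v)) f' (t - t) := by rwa [sub_self]
  simpa [sub_smul] using h.comp_sub_const t t

variable [FiniteDimensional ℝ E] [MeasurableSpace E] [BorelSpace E] {μ : Measure E}
  [μ.IsAddHaarMeasure]

lemma ae_forall_add_smul_notMem (hE : 1 < finrank ℝ E) {s : Set E} (hs : s.Countable) (v : E) :
    ∀ᵐ x ∂μ, ∀ t : ℝ, x + t • v ∉ s := by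
  have hspan : Submodule.span ℝ {v} ≠ ⊤ := fun h ↦ by
    have hle := finrank_span_le_card (R := ℝ) ({v} : Set E)
    rw [h, finrank_top, toFinset_singleton, Finset.card_singleton] at hle
    exact hle.not_gt hE
  have hnull : ∀ p ∈ s, ∀ᵐ x ∂μ, x + -p ∉ Submodule.span ℝ {v} := fun p _ ↦
    measure_mono_null (fun x hx ↦ by simpa using hx) <|
      (measure_preimage_add_right μ (-p) _).trans (Measure.addHaar_submodule μ _ hspan)
  filter_upwards [(ae_ball_iff hs).2 hnull] with x hx t hts
  exact hx _ hts (Submodule.mem_span_singleton.2 ⟨-t, by simp⟩)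

lemma integral_hasLineDerivAt_eq_zero [CompleteSpace F] (hE : 1 < finrank ℝ E) {s : Set E}
    (hs : s.Countable) {f f' : E → F} {v : E} (hderiv : ∀ x ∉ s, HasLineDerivAt ℝ f (f' x) x v)
    (hf : Integrable f μ) (hf' : Integrable f' μ) : ∫ x, f' x ∂μ = 0 := by
  let ν : Measure ℝ := volume.restrict (Ioc 0 1)
  have hshear : MeasurePreserving (fun p : ℝ × E ↦ (p.1, p.2 + p.1 • v)) (ν.prod μ) (ν.prod μ) :=
    (MeasurePreserving.id ν).skew_product (by fun_prop)
      (ae_of_all _ fun t ↦ map_add_right_eq_self μ (t • v))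
  have hint : Integrable (fun p : ℝ × E ↦ f' (p.2 + p.1 • v)) (ν.prod μ) :=
    hshear.integrable_comp_of_integrable (hf'.comp_snd ν)
  calc ∫ x, f' x ∂μ = ∫ t, ∫ x, f' (x + t • v) ∂μ ∂ν := by
        simp [ν, integral_add_right_eq_self]
    _ = ∫ x, ∫ t, f' (x + t • v) ∂ν ∂μ := integral_integral_swap hint
    _ = ∫ x, (f (x + v) - f x) ∂μ := by
        refine integral_congr_ae ?_
        filter_upwards [hint.prod_left_ae, ae_forall_add_smul_notMem hE hs v] with x hx hxs
        have hftc := intervalIntegral.integral_eq_sub_of_hasDerivAt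
          (fun t _ ↦ hasDerivAt_add_smul_of_hasLineDerivAt (hderiv _ (hxs t)))
          ((intervalIntegrable_iff_integrableOn_Ioc_of_le zero_le_one).2 hx)
        simpa [intervalIntegral.integral_of_le] using hftc
    _ = 0 := by
        rw [integral_sub (hf.comp_add_right v) hf, integral_add_right_eq_self, sub_self]

end LineDeriv

section VanishesToOrder

variable {E : Type*} [NormedAddCommGroup E]

lemma isBigO_norm_zpow {d e : ℤ} (hde : d ≤ e) :
    (fun x : E ↦ ‖x‖ ^ e) =O[𝓝[≠] 0] fun x ↦ ‖x‖ ^ d := by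
  refine IsBigO.of_bound 1 ?_
  filter_upwards [self_mem_nhdsWithin, mem_nhdsWithin_of_mem_nhds (ball_mem_nhds 0 one_pos)]
    with x hx hx1
  simpa using zpow_le_zpow_right_of_le_one₀ (norm_pos_iff.2 hx) (mem_ball_zero_iff.1 hx1).le hde

lemma tendsto_norm_zpow {d : ℤ} (hd : 0 < d) : Tendsto (fun x : E ↦ ‖x‖ ^ d) (𝓝[≠] 0) (𝓝 0) := by
  lift d to ℕ using hd.le
  have h : Continuous fun x : E ↦ ‖x‖ ^ d := by fun_prop
  simpa [Int.natCast_pos.1 hd |>.ne'] using h.continuousWithinAt.tendsto (s := {0}ᶜ) (x := 0)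

variable [NormedSpace ℝ E] {F G : Type*} [NormedAddCommGroup F] [NormedSpace ℝ F]
  [NormedAddCommGroup G] [NormedSpace ℝ G]

/-- `f` is `C¹` away from the origin, with `f = O(|x|ᵈ)` and `Df = O(|x|ᵈ⁻¹)` as `x → 0`; a negative
order `d` allows a pole. -/
structure VanishesToOrder (d : ℤ) (f : E → F) : Prop where
  contDiffOn : ContDiffOn ℝ 1 f {0}ᶜ
  isBigO : f =O[𝓝[≠] 0] fun x ↦ ‖x‖ ^ d
  fderiv_isBigO : fderiv ℝ f =O[𝓝[≠] 0] fun x ↦ ‖x‖ ^ (d - 1)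

namespace VanishesToOrder

variable {d e : ℤ} {f g : E → F}

lemma contDiffAt (hf : VanishesToOrder d f) {x : E} (hx : x ≠ 0) : ContDiffAt ℝ 1 f x :=
  hf.contDiffOn.contDiffAt (isOpen_compl_singleton.mem_nhds hx)

lemma differentiableAt (hf : VanishesToOrder d f) {x : E} (hx : x ≠ 0) : DifferentiableAt ℝ f x :=
  (hf.contDiffAt hx).differentiableAt one_ne_zero

lemma continuousOn_fderiv (hf : VanishesToOrder d f) : ContinuousOn (fderiv ℝ f) {0}ᶜ :=
  hf.contDiffOn.continuousOn_fderiv_of_isOpen isOpen_compl_singleton le_rfl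

lemma fderiv_apply_isBigO (hf : VanishesToOrder d f) (v : E) :
    (fun x ↦ fderiv ℝ f x v) =O[𝓝[≠] 0] fun x ↦ ‖x‖ ^ (d - 1) :=
  (ContinuousLinearMap.apply ℝ F v).isBigO_comp _ _ |>.trans hf.fderiv_isBigO

lemma add (hf : VanishesToOrder d f) (hg : VanishesToOrder d g) :
    VanishesToOrder d fun x ↦ f x + g x where
  contDiffOn := hf.contDiffOn.add hg.contDiffOn
  isBigO := hf.isBigO.add hg.isBigO
  fderiv_isBigO := by
    refine (hf.fderiv_isBigO.add hg.fderiv_isBigO).congr' ?_ .rfl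
    filter_upwards [self_mem_nhdsWithin] with x hx
    exact (fderiv_fun_add (hf.differentiableAt hx) (hg.differentiableAt hx)).symm

lemma sum {ι : Type*} (s : Finset ι) {f : ι → E → F} (hf : ∀ i ∈ s, VanishesToOrder d (f i)) :
    VanishesToOrder d fun x ↦ ∑ i ∈ s, f i x where
  contDiffOn := ContDiffOn.sum fun i hi ↦ (hf i hi).contDiffOn
  isBigO := IsBigO.fun_sum fun i hi ↦ (hf i hi).isBigO
  fderiv_isBigO := by
    refine (IsBigO.fun_sum fun i hi ↦ (hf i hi).fderiv_isBigO).congr' ?_ .rfl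
    filter_upwards [self_mem_nhdsWithin] with x hx
    exact (fderiv_fun_sum fun i hi ↦ (hf i hi).differentiableAt hx).symm

lemma smul {c : E → ℝ} (hc : VanishesToOrder d c) (hf : VanishesToOrder e f) :
    VanishesToOrder (d + e) fun x ↦ c x • f x where
  contDiffOn := hc.contDiffOn.smul hf.contDiffOn
  isBigO := by
    refine (hc.isBigO.smul hf.isBigO).congr' .rfl ?_
    filter_upwards [self_mem_nhdsWithin] with x hx
    rw [smul_eq_mul, zpow_add₀ (norm_ne_zero_iff.2 hx)]
  fderiv_isBigO := by
    have hcf : (fun x ↦ c x • fderiv ℝ f x) =O[𝓝[≠] 0] fun x ↦ ‖x‖ ^ (d + e - 1) := by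
      refine (hc.isBigO.smul hf.fderiv_isBigO).congr' .rfl ?_
      filter_upwards [self_mem_nhdsWithin] with x hx
      rw [smul_eq_mul, add_sub_assoc, zpow_add₀ (norm_ne_zero_iff.2 hx)]
    have hfc : (fun x ↦ (fderiv ℝ c x).smulRight (f x)) =O[𝓝[≠] 0]
        fun x ↦ ‖x‖ ^ (d + e - 1) := by
      refine (isBoundedBilinearMap_smulRight.isBigO_comp.trans
        (hc.fderiv_isBigO.norm_left.mul hf.isBigO.norm_left)).congr' .rfl ?_
      filter_upwards [self_mem_nhdsWithin] with x hx
      rw [add_sub_right_comm, zpow_add₀ (norm_ne_zero_iff.2 hx)]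
    refine (hcf.add hfc).congr' ?_ .rfl
    filter_upwards [self_mem_nhdsWithin] with x hx
    exact (fderiv_fun_smul (hc.differentiableAt hx) (hf.differentiableAt hx)).symm

lemma mul {f g : E → ℝ} (hf : VanishesToOrder d f) (hg : VanishesToOrder e g) :
    VanishesToOrder (d + e) fun x ↦ f x * g x :=
  hf.smul hg

lemma mono (hf : VanishesToOrder e f) (hde : d ≤ e) : VanishesToOrder d f where
  contDiffOn := hf.contDiffOn
  isBigO := hf.isBigO.trans (isBigO_norm_zpow hde)
  fderiv_isBigO := hf.fderiv_isBigO.trans (isBigO_norm_zpow (by lia))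

lemma comp (hf : VanishesToOrder d f) (hd : 0 < d) {h : F → G} (hh : ContDiff ℝ 1 h)
    (h0 : h 0 = 0) : VanishesToOrder d fun x ↦ h (f x) := by
  have hf0 : Tendsto f (𝓝[≠] 0) (𝓝 0) := hf.isBigO.trans_tendsto (tendsto_norm_zpow hd)
  refine ⟨hh.comp_contDiffOn hf.contDiffOn, ?_, ?_⟩
  · have hO : (fun y ↦ h y) =O[𝓝 0] fun y ↦ y := by
      simpa only [h0, sub_zero] using (hh.differentiable one_ne_zero 0).isBigO_sub
    exact (hO.comp_tendsto hf0).trans hf.isBigO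
  · have hO : (fun x ↦ fderiv ℝ h (f x)) =O[𝓝[≠] 0] fun _ ↦ (1 : ℝ) :=
      (((hh.continuous_fderiv one_ne_zero).tendsto 0).comp hf0).isBigO_one ℝ
    have hcomp : (fun x ↦ (fderiv ℝ h (f x)).comp (fderiv ℝ f x)) =O[𝓝[≠] 0]
        fun x ↦ ‖x‖ ^ (d - 1) := by
      simpa only [one_mul] using (isBoundedBilinearMap_comp.isBigO_comp).trans
        (hO.norm_left.mul hf.fderiv_isBigO.norm_left)
    refine hcomp.congr' ?_ .rfl
    filter_upwards [self_mem_nhdsWithin] with x hx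
    exact (fderiv_fun_comp x (hh.differentiable one_ne_zero _) (hf.differentiableAt hx)).symm

lemma const (c : F) : VanishesToOrder 0 fun _ : E ↦ c where
  contDiffOn := contDiffOn_const
  isBigO := by simpa using isBigO_const_const c (one_ne_zero (α := ℝ)) (𝓝[≠] (0 : E))
  fderiv_isBigO := by
    rw [fderiv_fun_const]
    exact isBigO_zero _ _

lemma sub (hf : VanishesToOrder d f) (hg : VanishesToOrder d g) :
    VanishesToOrder d fun x ↦ f x - g x := by
  have hneg : VanishesToOrder d fun x ↦ (-1 : ℝ) • g x := by
    simpa only [zero_add] using (const (-1 : ℝ)).smul hg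
  simpa only [sub_eq_add_neg, neg_smul, one_smul] using hf.add hneg

protected lemma id : VanishesToOrder 1 fun x : E ↦ x where
  contDiffOn := contDiffOn_id
  isBigO := by simpa using (isBigO_refl (fun x : E ↦ x) _).norm_right
  fderiv_isBigO := by
    simpa using isBigO_const_const (ContinuousLinearMap.id ℝ E) (one_ne_zero (α := ℝ)) (𝓝[≠] 0)

lemma zero_of_contDiff_comp (hf : VanishesToOrder 1 f) {h : F → G} (hh : ContDiff ℝ 1 h) :
    VanishesToOrder 0 fun x ↦ h (f x) := by
  have hsub : VanishesToOrder 1 fun x ↦ h (f x) - h 0 :=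
    hf.comp one_pos (hh.sub contDiff_const) (sub_self _)
  simpa only [sub_add_cancel] using (hsub.mono zero_le_one).add (const (h 0))

end VanishesToOrder

lemma vanishesToOrder_zero_of_contDiff {f : E → F} (hf : ContDiff ℝ 1 f) : VanishesToOrder 0 f :=
  VanishesToOrder.id.zero_of_contDiff_comp hf

lemma vanishesToOrder_norm_zpow {E : Type*} [NormedAddCommGroup E] [InnerProductSpace ℝ E] (d : ℤ) :
    VanishesToOrder d fun x : E ↦ ‖x‖ ^ d := by
  have hne : ∀ x ∈ ({0}ᶜ : Set E), ‖x‖ ≠ 0 := fun x hx ↦ norm_ne_zero_iff.2 hx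
  refine ⟨fun x hx ↦ ?_, isBigO_refl _ _, IsBigO.of_bound |(d : ℝ)| ?_⟩
  · exact (((analyticAt_id.zpow (hne x hx)).contDiffAt (n := 1)).comp x
      (contDiffAt_norm ℝ hx)).contDiffWithinAt
  · filter_upwards [self_mem_nhdsWithin] with x hx
    have hderiv := (hasDerivAt_zpow d ‖x‖ (.inl (hne x hx))).comp_hasFDerivAt x
      ((contDiffAt_norm ℝ hx).differentiableAt one_ne_zero).hasFDerivAt
    have hnorm : ‖fderiv ℝ (fun y : E ↦ ‖y‖) x‖ ≤ 1 := by
      simpa using norm_fderiv_le_of_lipschitz ℝ (lipschitzWith_one_norm (E := E)) (x₀ := x)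
    rw [show fderiv ℝ (fun y : E ↦ ‖y‖ ^ d) x = _ from hderiv.fderiv, norm_smul, norm_mul,
      Real.norm_eq_abs]
    exact mul_le_of_le_one_right (by positivity) hnorm

end VanishesToOrder

section Integral

lemma integrable_of_hasCompactSupport {X F : Type*} [TopologicalSpace X] [MeasurableSpace X]
    [NormedAddCommGroup F] {μ : Measure X} {f : X → F} (hf : LocallyIntegrable f μ)
    (hsupp : HasCompactSupport f) : Integrable f μ :=
  (integrableOn_iff_integrable_of_support_subset (subset_tsupport f)).1
    (hf.integrableOn_isCompact hsupp)

variable {E F : Type*} [NormedAddCommGroup E] [NormedSpace ℝ E] [FiniteDimensional ℝ E]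
  [Nontrivial E] [MeasurableSpace E] [BorelSpace E] [NormedAddCommGroup F] {μ : Measure E}
  [μ.IsAddHaarMeasure]

lemma integrableOn_ball_norm_zpow {d : ℤ} (hd : -(finrank ℝ E : ℤ) < d) (R : ℝ) :
    IntegrableOn (fun x : E ↦ ‖x‖ ^ d) (ball 0 R) μ := by
  rw [integrableOn_fun_norm_addHaar μ (f := fun r ↦ r ^ d)]
  obtain ⟨n, hn⟩ : ∃ n : ℕ, (finrank ℝ E - 1 : ℕ) + d = n :=
    ⟨_, (Int.toNat_of_nonneg (by have := finrank_pos (R := ℝ) (M := E); lia)).symm⟩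
  have hpow : IntegrableOn (fun r : ℝ ↦ r ^ n) (Ioo 0 R) :=
    (continuous_pow n).integrableOn_Icc.mono_set Ioo_subset_Icc_self
  refine hpow.congr_fun (fun r hr ↦ ?_) measurableSet_Ioo
  rw [smul_eq_mul, ← zpow_natCast r (_ - 1), ← zpow_add₀ hr.1.ne', hn, zpow_natCast]

lemma locallyIntegrable_of_isBigO_norm_zpow {f : E → F} {d : ℤ} (hcont : ContinuousOn f {0}ᶜ)
    (hf : f =O[𝓝[≠] 0] fun x ↦ ‖x‖ ^ d) (hd : -(finrank ℝ E : ℤ) < d) :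
    LocallyIntegrable f μ := by
  intro x
  rcases eq_or_ne x 0 with rfl | hx
  · have hpole : IntegrableAtFilter (fun x : E ↦ ‖x‖ ^ d) (𝓝[≠] 0) μ :=
      IntegrableAtFilter.inf_of_left
        ⟨ball 0 1, ball_mem_nhds 0 one_pos, integrableOn_ball_norm_zpow hd 1⟩
    have hne : 𝓝 (0 : E) ⊓ ae μ ≤ 𝓝[≠] 0 :=
      inf_le_inf_left _ (le_principal_iff.2 (compl_mem_ae_iff.2 (measure_singleton 0)))
    have := (measurableSet_singleton (0 : E)).compl.nhdsWithin_isMeasurablyGenerated 0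
    exact IntegrableAtFilter.of_inf_ae <| IntegrableAtFilter.filter_mono hne <|
      hf.integrableAtFilter (hcont.stronglyMeasurableAtFilter_nhdsWithin
        (measurableSet_singleton 0).compl 0) hpole
  · have h := hcont.locallyIntegrableOn (μ := μ) (measurableSet_singleton 0).compl x hx
    rwa [isOpen_compl_singleton.nhdsWithin_eq hx] at h

variable [NormedSpace ℝ F] {d : ℤ} {f : E → F}

lemma VanishesToOrder.locallyIntegrable (hf : VanishesToOrder d f)
    (hd : -(finrank ℝ E : ℤ) < d) : LocallyIntegrable f μ :=
  locallyIntegrable_of_isBigO_norm_zpow hf.contDiffOn.continuousOn hf.isBigO hd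

lemma VanishesToOrder.locallyIntegrable_fderiv_apply (hf : VanishesToOrder d f)
    (hd : 1 - (finrank ℝ E : ℤ) < d) (v : E) : LocallyIntegrable (fun x ↦ fderiv ℝ f x v) μ :=
  locallyIntegrable_of_isBigO_norm_zpow (hf.continuousOn_fderiv.clm_apply continuousOn_const)
    (hf.fderiv_apply_isBigO v) (by lia)

lemma VanishesToOrder.integrable_fderiv_apply (hf : VanishesToOrder d f)
    (hd : 1 - (finrank ℝ E : ℤ) < d) (hsupp : HasCompactSupport f) (v : E) :
    Integrable (fun x ↦ fderiv ℝ f x v) μ :=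
  integrable_of_hasCompactSupport (hf.locallyIntegrable_fderiv_apply hd v)
    (hsupp.fderiv_apply ℝ v)

lemma VanishesToOrder.integral_fderiv_apply_eq_zero [CompleteSpace F] (hf : VanishesToOrder d f)
    (hE : 1 < finrank ℝ E) (hd : 1 - (finrank ℝ E : ℤ) < d) (hsupp : HasCompactSupport f) (v : E) :
    ∫ x, fderiv ℝ f x v ∂μ = 0 :=
  integral_hasLineDerivAt_eq_zero hE (countable_singleton 0)
    (fun x hx ↦ (hf.differentiableAt hx).hasFDerivAt.hasLineDerivAt v)
    (integrable_of_hasCompactSupport (hf.locallyIntegrable (by lia)) hsupp)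
    (hf.integrable_fderiv_apply hd hsupp v)

end Integral

section Polar

lemma integral_volumeIoiPow {F : Type*} [NormedAddCommGroup F] [NormedSpace ℝ F] (n : ℕ)
    (g : ℝ → F) :
    ∫ r : Ioi (0 : ℝ), g r ∂Measure.volumeIoiPow n = ∫ r in Ioi (0 : ℝ), r ^ n • g r := by
  simp only [Measure.volumeIoiPow, ENNReal.ofReal]
  rw [integral_withDensity_eq_integral_smul (measurable_subtype_coe.pow_const _).real_toNNReal,
    integral_subtype_comap measurableSet_Ioi fun r : ℝ ↦ (r ^ n).toNNReal • g r]
  refine setIntegral_congr_fun measurableSet_Ioi fun r hr ↦ ?_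
  simp only [NNReal.smul_def, Real.coe_toNNReal _ (pow_nonneg (mem_Ioi.1 hr).le n)]

lemma integral_Ioi_fderiv_smul {E : Type*} [NormedAddCommGroup E] [NormedSpace ℝ E] {φ : E → ℝ}
    (hφ : ContDiff ℝ 1 φ) (hsupp : HasCompactSupport φ) {v : E} (hv : v ≠ 0) :
    ∫ r in Ioi (0 : ℝ), fderiv ℝ φ (r • v) v = -φ 0 := by
  have hderiv : ∀ r : ℝ, deriv (fun r : ℝ ↦ φ (r • v)) r = fderiv ℝ φ (r • v) v := fun r ↦ by
    have hline : HasDerivAt (fun r : ℝ ↦ r • v) v r := by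
      simpa using (hasDerivAt_id r).smul_const v
    exact ((hφ.differentiable one_ne_zero _).hasFDerivAt.comp_hasDerivAt r hline).deriv
  have hray : HasCompactSupport fun r : ℝ ↦ φ (r • v) :=
    hsupp.comp_isClosedEmbedding (isClosedEmbedding_smul_left hv)
  have hφv : ContDiff ℝ 1 fun r : ℝ ↦ φ (r • v) := hφ.comp (contDiff_id.smul contDiff_const)
  simpa only [hderiv, zero_smul] using hray.integral_Ioi_deriv_eq hφv 0

variable {E : Type*} [NormedAddCommGroup E] [NormedSpace ℝ E] [FiniteDimensional ℝ E]
  [Nontrivial E] [MeasurableSpace E] [BorelSpace E] {μ : Measure E} [μ.IsAddHaarMeasure]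

lemma integral_eq_integral_sphere_integral_Ioi {F : Type*} [NormedAddCommGroup F] [NormedSpace ℝ F]
    {f : E → F} (hf : Integrable f μ) :
    ∫ x, f x ∂μ = ∫ ω : sphere (0 : E) 1,
      (∫ r in Ioi (0 : ℝ), r ^ (finrank ℝ E - 1) • f (r • (ω : E))) ∂μ.toSphere := by
  let g : sphere (0 : E) 1 × Ioi (0 : ℝ) → F := fun p ↦ f (p.2.1 • (p.1 : E))
  have hpolar := μ.measurePreserving_homeomorphUnitSphereProd
  have hemb := (homeomorphUnitSphereProd E).measurableEmbedding
  have hg : ∀ x, g (homeomorphUnitSphereProd E x) = f x := fun x ↦ by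
    simp [g, smul_smul, norm_ne_zero_iff.2 x.2]
  have hgint : Integrable g (μ.toSphere.prod (.volumeIoiPow (finrank ℝ E - 1))) := by
    rw [← hpolar.integrable_comp_emb hemb, funext (f := g ∘ _) hg]
    exact (integrableOn_iff_comap_subtypeVal (measurableSet_singleton 0).compl).1 hf.integrableOn
  calc ∫ x, f x ∂μ = ∫ x : ({0}ᶜ : Set E), f x ∂(μ.comap (↑)) := by
        rw [integral_subtype_comap (measurableSet_singleton 0).compl, restrict_compl_singleton]
    _ = ∫ p, g p ∂(μ.toSphere.prod (.volumeIoiPow (finrank ℝ E - 1))) := by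
        simp only [← hpolar.integral_comp hemb, hg]
    _ = _ := by
        rw [integral_prod _ hgint]
        exact integral_congr_ae (ae_of_all _ fun ω ↦
          integral_volumeIoiPow _ fun r ↦ f (r • (ω : E)))

variable {φ h : E → ℝ}

lemma integrable_fderiv_self_mul_norm_zpow_mul (hφ : ContDiff ℝ 1 φ)
    (hsupp : HasCompactSupport φ) (hcont : ContinuousOn h {0}ᶜ)
    (hhom : ∀ r : ℝ, 0 < r → ∀ x, h (r • x) = h x) :
    Integrable (fun x ↦ fderiv ℝ φ x x * ‖x‖ ^ (-finrank ℝ E : ℤ) * h x) μ := by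
  have hφ' : Continuous fun x ↦ fderiv ℝ φ x x :=
    (hφ.continuous_fderiv one_ne_zero).clm_apply continuous_id
  obtain ⟨C, hC⟩ := (isCompact_sphere (0 : E) 1).exists_bound_of_continuousOn
    (hcont.mono fun x hx ↦ ne_zero_of_mem_unit_sphere ⟨x, hx⟩)
  have hradial : (fun x ↦ fderiv ℝ φ x x) =O[𝓝[≠] 0] fun x ↦ ‖x‖ := by
    have h1 : fderiv ℝ φ =O[𝓝[≠] 0] fun _ ↦ (1 : ℝ) :=
      (hφ.continuous_fderiv one_ne_zero).continuousWithinAt.tendsto.isBigO_one ℝ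
    simpa using isBoundedBilinearMap_apply.isBigO_comp.trans
      (h1.norm_left.mul (isBigO_refl (fun x : E ↦ ‖x‖) _))
  have hbdd : h =O[𝓝[≠] 0] fun _ ↦ (1 : ℝ) := by
    refine IsBigO.of_bound C ?_
    filter_upwards [self_mem_nhdsWithin] with x hx
    have hx' : 0 < ‖x‖ := norm_pos_iff.2 hx
    rw [← hhom ‖x‖⁻¹ (inv_pos.2 hx'), norm_one, mul_one]
    exact hC _ (by simp [norm_smul, hx'.ne'])
  refine integrable_of_hasCompactSupport (locallyIntegrable_of_isBigO_norm_zpow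
    (d := 1 - finrank ℝ E) ?_ ?_ (by lia)) ?_
  · refine (hφ'.continuousOn.mul fun x hx ↦ ?_).mul hcont
    exact (continuous_norm.continuousAt.zpow₀ _
      (.inl (norm_ne_zero_iff.2 hx))).continuousWithinAt
  · refine ((hradial.mul (isBigO_refl _ _)).mul hbdd).congr' .rfl ?_
    filter_upwards [self_mem_nhdsWithin] with x hx
    rw [mul_one, sub_eq_add_neg, zpow_add₀ (norm_ne_zero_iff.2 hx), zpow_one]
  · have hradial_supp : HasCompactSupport fun x ↦ fderiv ℝ φ x x :=
      (hsupp.fderiv ℝ).mono fun x hx h0 ↦ hx (by simp [h0])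
    exact hradial_supp.mul_right.mul_right

/-- In polar coordinates the weight cancels the Jacobian, and `φ` is integrated along rays. -/
lemma integral_fderiv_self_mul_norm_zpow_mul (hφ : ContDiff ℝ 1 φ) (hsupp : HasCompactSupport φ)
    (hcont : ContinuousOn h {0}ᶜ) (hhom : ∀ r : ℝ, 0 < r → ∀ x, h (r • x) = h x) :
    ∫ x, fderiv ℝ φ x x * ‖x‖ ^ (-finrank ℝ E : ℤ) * h x ∂μ =
      -φ 0 * ∫ ω : sphere (0 : E) 1, h ω ∂μ.toSphere := by
  rw [integral_eq_integral_sphere_integral_Ioi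
    (integrable_fderiv_self_mul_norm_zpow_mul hφ hsupp hcont hhom), ← integral_const_mul]
  refine integral_congr_ae (ae_of_all _ fun ω ↦ ?_)
  have hω : (ω : E) ≠ 0 := ne_zero_of_mem_unit_sphere ω
  simp only
  rw [← integral_Ioi_fderiv_smul hφ hsupp hω, ← integral_mul_const]
  refine setIntegral_congr_fun measurableSet_Ioi fun r hr ↦ ?_
  have hr' : 0 < r := hr
  have hpow : r ^ (finrank ℝ E - 1) * r * r ^ (-finrank ℝ E : ℤ) = 1 := by
    rw [← pow_succ, Nat.sub_add_cancel finrank_pos, ← zpow_natCast, zpow_neg,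
      mul_inv_cancel₀ (zpow_ne_zero _ hr'.ne')]
  simp only [hhom r hr', norm_smul, norm_eq_of_mem_sphere, mul_one, map_smul, smul_eq_mul,
    Real.norm_of_nonneg hr'.le]
  linear_combination fderiv ℝ φ (r • (ω : E)) ω * h ω * hpow

end Polar

section SphereMoments

open scoped Pointwise

lemma integral_toSphere_comp_linearIsometryEquiv {E F : Type*} [NormedAddCommGroup E]
    [NormedSpace ℝ E] [MeasurableSpace E] [BorelSpace E] [NormedAddCommGroup F] [NormedSpace ℝ F]
    {μ : Measure E} (A : E ≃ₗᵢ[ℝ] E) (hA : MeasurePreserving A μ μ) {h : E → F}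
    (hh : AEStronglyMeasurable (fun ω : sphere (0 : E) 1 ↦ h ω) μ.toSphere) :
    ∫ ω : sphere (0 : E) 1, h (A ω) ∂μ.toSphere = ∫ ω : sphere (0 : E) 1, h ω ∂μ.toSphere := by
  let T : sphere (0 : E) 1 → sphere (0 : E) 1 := fun ω ↦ ⟨A ω, by simp⟩
  have hT : Continuous T := by fun_prop
  have hcone : ∀ s : Set (sphere (0 : E) 1),
      Ioo (0 : ℝ) 1 • ((↑) '' (T ⁻¹' s)) = A ⁻¹' (Ioo (0 : ℝ) 1 • ((↑) '' s)) := fun s ↦ by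
    ext x
    simp only [Set.mem_smul, mem_preimage]
    constructor
    · rintro ⟨r, hr, _, ⟨ω, hω, rfl⟩, rfl⟩
      exact ⟨r, hr, _, ⟨T ω, hω, rfl⟩, (map_smul A r _).symm⟩
    · rintro ⟨r, hr, _, ⟨ω, hω, rfl⟩, hx⟩
      refine ⟨r, hr, _, ⟨⟨A.symm ω, by simp⟩, by simpa [T] using hω, rfl⟩, A.injective ?_⟩
      simpa using hx
  have hmap : μ.toSphere.map T = μ.toSphere := by
    ext s hs
    rw [Measure.map_apply hT.measurable hs, μ.toSphere_apply' (hT.measurable hs),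
      μ.toSphere_apply' hs, hcone, hA.measure_preimage_emb
        A.toHomeomorph.measurableEmbedding]
  calc ∫ ω, h (A ω) ∂μ.toSphere = ∫ ω, h ω ∂(μ.toSphere.map T) := by
        rw [integral_map hT.aemeasurable (by rwa [hmap])]
    _ = ∫ ω, h ω ∂μ.toSphere := by rw [hmap]

variable {ι : Type*} [Fintype ι]

lemma integral_sphere_mul_of_ne {i j : ι} (hij : i ≠ j) :
    ∫ ω : sphere (0 : EuclideanSpace ℝ ι) 1, ω.1 i * ω.1 j ∂volume.toSphere = 0 := by
  classical
  let A : EuclideanSpace ℝ ι ≃ₗᵢ[ℝ] EuclideanSpace ℝ ι := LinearIsometryEquiv.piLpCongrRight 2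
    (Function.update (fun _ ↦ .refl ℝ ℝ) i (.neg ℝ))
  have hAi : ∀ x, A x i = -x i := fun x ↦ by simp [A]
  have hAj : ∀ x, A x j = x j := fun x ↦ by simp [A, hij.symm]
  have hodd := integral_toSphere_comp_linearIsometryEquiv A A.measurePreserving
    (h := fun x ↦ x i * x j) (by fun_prop)
  simp only [hAi, hAj, neg_mul, integral_neg] at hodd
  linarith

lemma integral_sphere_sq_eq (i j : ι) :
    ∫ ω : sphere (0 : EuclideanSpace ℝ ι) 1, ω.1 i ^ 2 ∂volume.toSphere =
      ∫ ω : sphere (0 : EuclideanSpace ℝ ι) 1, ω.1 j ^ 2 ∂volume.toSphere := by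
  classical
  let A : EuclideanSpace ℝ ι ≃ₗᵢ[ℝ] EuclideanSpace ℝ ι :=
    LinearIsometryEquiv.piLpCongrLeft 2 ℝ ℝ (Equiv.swap i j)
  have hA : ∀ x, A x j = x i := fun x ↦ by simp [A, LinearIsometryEquiv.piLpCongrLeft_apply]
  simpa only [hA] using integral_toSphere_comp_linearIsometryEquiv A A.measurePreserving
    (h := fun x ↦ x j ^ 2) (by fun_prop)

lemma integral_sphere_mul [DecidableEq ι] (i j : ι) :
    ∫ ω : sphere (0 : EuclideanSpace ℝ ι) 1, ω.1 i * ω.1 j ∂volume.toSphere =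
      if i = j then (volume : Measure (EuclideanSpace ℝ ι)).toSphere.real univ / Fintype.card ι
      else 0 := by
  split_ifs with hij
  · subst hij
    have hint : ∀ k ∈ Finset.univ, Integrable
        (fun ω : sphere (0 : EuclideanSpace ℝ ι) 1 ↦ ω.1 k ^ 2) volume.toSphere := fun k _ ↦
      (by fun_prop : Continuous _).integrable_of_hasCompactSupport (.of_compactSpace _)
    have hcard : (Fintype.card ι : ℝ) ≠ 0 := by exact_mod_cast (Fintype.card_pos_iff.2 ⟨i⟩).ne'
    rw [eq_div_iff hcard]
    calc _ = ∑ k, ∫ ω : sphere (0 : EuclideanSpace ℝ ι) 1, ω.1 k ^ 2 ∂volume.toSphere := by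
          simp [integral_sphere_sq_eq _ i, ← sq, mul_comm]
      _ = ∫ _ : sphere (0 : EuclideanSpace ℝ ι) 1, (1 : ℝ) ∂volume.toSphere := by
          simp only [← integral_finsetSum _ hint, ← EuclideanSpace.real_norm_sq_eq,
            norm_eq_of_mem_sphere, one_pow]
      _ = _ := by simp
  · exact integral_sphere_mul_of_ne hij

lemma toSphere_real_univ_fin_three :
    (volume : Measure (EuclideanSpace ℝ (Fin 3))).toSphere.real univ = 4 * π := by
  have hvol : 0 ≤ π * 4 / 3 := by positivity
  rw [Measure.toSphere_real_apply_univ, measureReal_def, EuclideanSpace.volume_ball_fin_three]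
  simp only [finrank_euclideanSpace_fin, Nat.cast_ofNat, ENNReal.ofReal_one, one_pow, one_mul,
    ENNReal.toReal_ofReal hvol]
  ring

end SphereMoments

section SphericalMean

variable {F : Type*} [NormedAddCommGroup F] [NormedSpace ℝ F]

lemma contDiff_one_integral_of_continuous {K : Type*} [TopologicalSpace K] [CompactSpace K]
    [MeasurableSpace K] [OpensMeasurableSpace K] [SecondCountableTopologyEither K F]
    {ν : Measure K} [IsFiniteMeasure ν] {f f' : ℝ → K → F} (hf : ∀ r, Continuous (f r))
    (hf' : Continuous (Function.uncurry f'))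
    (hderiv : ∀ r ω, HasDerivAt (fun s ↦ f s ω) (f' r ω) r) :
    ContDiff ℝ 1 fun r ↦ ∫ ω, f r ω ∂ν := by
  have hint : ∀ r, HasDerivAt (fun r ↦ ∫ ω, f r ω ∂ν) (∫ ω, f' r ω ∂ν) r := fun r ↦ by
    obtain ⟨C, hC⟩ := ((isCompact_closedBall r 1).prod isCompact_univ).exists_bound_of_continuousOn
      hf'.continuousOn
    exact (hasDerivAt_integral_of_dominated_loc_of_deriv_le (closedBall_mem_nhds r one_pos)
      (.of_forall fun s ↦ (hf s).aestronglyMeasurable)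
      ((hf r).integrable_of_hasCompactSupport (.of_compactSpace _))
      (hf'.uncurry_left r).aestronglyMeasurable
      (ae_of_all _ fun ω s hs ↦ hC (s, ω) ⟨hs, mem_univ ω⟩) (integrable_const C)
      (ae_of_all _ fun ω s _ ↦ hderiv s ω)).2
  rw [contDiff_one_iff_deriv, funext fun r ↦ (hint r).deriv]
  refine ⟨fun r ↦ (hint r).differentiableAt, ?_⟩
  simpa using continuous_parametric_integral_of_continuous (μ := ν) hf' isCompact_univ

variable {E : Type*} [NormedAddCommGroup E] [NormedSpace ℝ E] [FiniteDimensional ℝ E]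
  [MeasurableSpace E] {ν : Measure (sphere (0 : E) 1)}

lemma contDiff_one_integral_sphere [BorelSpace E] [IsFiniteMeasure ν] {f : E → F}
    (hf : ContDiff ℝ 1 f) :
    ContDiff ℝ 1 fun r : ℝ ↦ ∫ ω : sphere (0 : E) 1, f (r • (ω : E)) ∂ν := by
  refine contDiff_one_integral_of_continuous (fun r ↦ by fun_prop)
    (f' := fun r ω ↦ fderiv ℝ f (r • (ω : E)) ω) ?_ fun r ω ↦ ?_
  · exact ((hf.continuous_fderiv one_ne_zero).comp (by fun_prop)).clm_apply (by fun_prop)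
  · exact (hf.differentiable one_ne_zero _).hasFDerivAt.comp_hasDerivAt r
      (by simpa using (hasDerivAt_id r).smul_const (ω : E))

lemma hasCompactSupport_integral_sphere_comp_norm {f : E → F} (hf : HasCompactSupport f) :
    HasCompactSupport fun x : E ↦ ∫ ω : sphere (0 : E) 1, f (‖x‖ • (ω : E)) ∂ν := by
  obtain ⟨R, hR⟩ := hf.isCompact.isBounded.subset_closedBall 0
  refine .intro (isCompact_closedBall (0 : E) R) fun x hx ↦ ?_
  refine integral_eq_zero_of_ae (ae_of_all _ fun ω ↦ image_eq_zero_of_notMem_tsupport fun h ↦ hx ?_)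
  simpa [norm_smul] using hR h

end SphericalMean

section PartialDerivatives

lemma hasFDerivAt_norm {E : Type*} [NormedAddCommGroup E] [InnerProductSpace ℝ E] {x : E}
    (hx : x ≠ 0) : HasFDerivAt (fun y : E ↦ ‖y‖) (‖x‖⁻¹ • innerSL ℝ x) x := by
  have hsq := (hasStrictFDerivAt_norm_sq x).hasFDerivAt.sqrt (by positivity)
  simp only [Real.sqrt_sq (norm_nonneg _)] at hsq
  convert hsq using 1
  ext y
  simp only [smul_apply, coe_innerSL_apply, smul_eq_mul, ofNat_smul_eq_nsmul, nsmul_eq_mul]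
  ring

variable {f g : E3 → ℝ} {x : E3} (k : Fin 3)

lemma pd_add (hf : DifferentiableAt ℝ f x) (hg : DifferentiableAt ℝ g x) :
    pd k (fun y ↦ f y + g y) x = pd k f x + pd k g x := by
  simp only [pd, fderiv_fun_add hf hg, add_apply]

lemma pd_sub (hf : DifferentiableAt ℝ f x) (hg : DifferentiableAt ℝ g x) :
    pd k (fun y ↦ f y - g y) x = pd k f x - pd k g x := by
  simp only [pd, fderiv_fun_sub hf hg, sub_apply]

lemma pd_sum {ι : Type*} (s : Finset ι) {f : ι → E3 → ℝ} (hf : ∀ i, DifferentiableAt ℝ (f i) x) :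
    pd k (fun y ↦ ∑ i ∈ s, f i y) x = ∑ i ∈ s, pd k (f i) x := by
  simp only [pd, fderiv_fun_sum fun i _ ↦ hf i, sum_apply]

lemma pd_mul (hf : DifferentiableAt ℝ f x) (hg : DifferentiableAt ℝ g x) :
    pd k (fun y ↦ f y * g y) x = pd k f x * g x + f x * pd k g x := by
  simp only [pd, fderiv_fun_mul hf hg, add_apply, smul_apply, smul_eq_mul]
  ring

lemma pd_const_mul (c : ℝ) (hf : DifferentiableAt ℝ f x) :
    pd k (fun y ↦ c * f y) x = c * pd k f x := by
  simp only [pd, fderiv_const_mul hf, smul_apply, smul_eq_mul]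

lemma pd_coord (i : Fin 3) : pd k (fun y ↦ y i) x = if i = k then 1 else 0 := by
  rw [pd, show fderiv ℝ (fun y : E3 ↦ y i) x = EuclideanSpace.proj i from
    (EuclideanSpace.proj i : E3 →L[ℝ] ℝ).hasFDerivAt.fderiv]
  simp

variable {k}

lemma pd_comp_norm {g : ℝ → ℝ} {g' : ℝ} (hx : x ≠ 0) (hg : HasDerivAt g g' ‖x‖) :
    pd k (fun y ↦ g ‖y‖) x = g' * (x k / ‖x‖) := by
  have h := hg.comp_hasFDerivAt x (hasFDerivAt_norm hx)
  rw [pd, show fderiv ℝ (fun y ↦ g ‖y‖) x = _ from h.fderiv]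
  simp [div_eq_inv_mul, EuclideanSpace.inner_single_right]

lemma pd_norm_zpow (n : ℤ) (hx : x ≠ 0) :
    pd k (fun y ↦ ‖y‖ ^ n) x = n * x k * ‖x‖ ^ (n - 2) := by
  have hx0 : ‖x‖ ≠ 0 := norm_ne_zero_iff.2 hx
  rw [pd_comp_norm hx (hasDerivAt_zpow n ‖x‖ (.inl hx0)), show n - 2 = n - 1 - 1 by ring,
    zpow_sub_one₀ hx0 (n - 1)]
  ring

lemma contDiff_pd {n : ℕ} (hf : ContDiff ℝ (n + 1) f) : ContDiff ℝ n (pd k f) :=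
  (hf.fderiv_right le_rfl).clm_apply contDiff_const

lemma hasCompactSupport_pd (hf : HasCompactSupport f) : HasCompactSupport (pd k f) :=
  hf.fderiv_apply ℝ _

lemma fderiv_apply_eq_sum_pd (f : E3 → ℝ) (x y : E3) :
    fderiv ℝ f x y = ∑ k, y k * pd k f x := by
  conv_lhs => rw [← (EuclideanSpace.basisFun (Fin 3) ℝ).sum_repr y]
  simp [pd]

lemma vanishesToOrder_coord (i : Fin 3) : VanishesToOrder 1 fun x : E3 ↦ x i :=
  VanishesToOrder.id.comp one_pos (EuclideanSpace.proj i : E3 →L[ℝ] ℝ).contDiff rfl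

end PartialDerivatives

section FundamentalMatrix

variable (α : ℝ) (i j k : Fin 3) {x : E3}

lemma Phi_comm : Phi α x i j = Phi α x j i := by
  simp only [Phi, eq_comm (a := i), mul_comm (x i)]

lemma Phi_eq_zpow :
    Phi α x i j = cA α * ((if i = j then 1 else 0) * ‖x‖ ^ (-1 : ℤ) +
      α / (α + 2) * (x i * x j * ‖x‖ ^ (-3 : ℤ))) := by
  simp only [Phi, zpow_neg, zpow_one]
  norm_cast
  ring

lemma vanishesToOrder_Phi : VanishesToOrder (-1) fun x ↦ Phi α x i j := by
  simp only [Phi_eq_zpow]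
  have hiso := (VanishesToOrder.const (E := E3) (if i = j then (1 : ℝ) else 0)).mul
    (vanishesToOrder_norm_zpow (E := E3) (-1))
  have haniso := (VanishesToOrder.const (α / (α + 2))).mul
    (((vanishesToOrder_coord i).mul (vanishesToOrder_coord j)).mul (vanishesToOrder_norm_zpow (-3)))
  exact (VanishesToOrder.const (cA α)).mul (hiso.add haniso)

variable {α i j k}

lemma pd_Phi (hx : x ≠ 0) :
    pd k (fun y ↦ Phi α y i j) x =
      cA α * (-(if i = j then 1 else 0) * x k * ‖x‖ ^ (-3 : ℤ) + α / (α + 2) *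
        (((if i = k then 1 else 0) * x j + x i * (if j = k then 1 else 0)) * ‖x‖ ^ (-3 : ℤ) -
          3 * (x i * x j * x k) * ‖x‖ ^ (-5 : ℤ))) := by
  have hcoord : ∀ l, DifferentiableAt ℝ (fun y : E3 ↦ y l) x := fun l ↦
    (vanishesToOrder_coord l).differentiableAt hx
  have hpow : ∀ n : ℤ, DifferentiableAt ℝ (fun y : E3 ↦ ‖y‖ ^ n) x := fun n ↦
    (vanishesToOrder_norm_zpow n).differentiableAt hx
  have hij := (hcoord i).fun_mul (hcoord j)
  have hiso := (hpow (-1)).const_mul (if i = j then (1 : ℝ) else 0)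
  have haniso := (hij.fun_mul (hpow (-3))).const_mul (α / (α + 2))
  simp only [Phi_eq_zpow]
  rw [pd_const_mul k _ (hiso.fun_add haniso), pd_add k hiso haniso, pd_const_mul k _ (hpow (-1)),
    pd_const_mul k _ (hij.fun_mul (hpow (-3))), pd_mul k hij (hpow (-3)),
    pd_mul k (hcoord i) (hcoord j), pd_norm_zpow _ hx, pd_norm_zpow _ hx, pd_coord, pd_coord]
  push_cast
  ring

lemma norm_sq_mul_norm_zpow_neg_five (hx : x ≠ 0) :
    (∑ i, x i ^ 2) * ‖x‖ ^ (-5 : ℤ) = ‖x‖ ^ (-3 : ℤ) := by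
  rw [← EuclideanSpace.real_norm_sq_eq, ← zpow_natCast, ← zpow_add₀ (norm_ne_zero_iff.2 hx)]
  norm_num

lemma sum_pd_Phi (hx : x ≠ 0) :
    ∑ i, pd i (fun y ↦ Phi α y i j) x =
      cA α * (α / (α + 2) - 1) * (x j * ‖x‖ ^ (-3 : ℤ)) := by
  have hij : ∑ i, (if i = j then 1 else 0) * x i = x j := by simp
  have hji : ∑ i, x i * (if j = i then 1 else 0) = x j := by simp
  have hr := norm_sq_mul_norm_zpow_neg_five hx
  simp only [pd_Phi hx, Fin.sum_univ_three, if_true] at hij hji hr ⊢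
  linear_combination cA α * (‖x‖ ^ (-3 : ℤ) * (α / (α + 2) * hji - hij) -
    3 * (α / (α + 2)) * x j * hr)

end FundamentalMatrix

section FundamentalSolution

variable {α : ℝ} {i j k : Fin 3} {x : E3} {u : E3 → Fin 3 → ℝ}

/-- The tensor `τₖᵢ = ∂ₖuᵢ + α δₖᵢ div u`, normalised so that `Lu = -∂ₖτₖ`. -/
def stress (α : ℝ) (u : E3 → Fin 3 → ℝ) (k i : Fin 3) (x : E3) : ℝ :=
  pd k (fun y ↦ u y i) x + if k = i then α * divg u x else 0

lemma sum_stress_mul (w : Fin 3 → Fin 3 → ℝ) :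
    ∑ i, ∑ k, stress α u k i x * w k i =
      ∑ i, ∑ k, pd k (fun y ↦ u y i) x * w k i + α * divg u x * ∑ i, w i i := by
  simp only [stress, add_mul, Finset.sum_add_distrib, ite_mul, zero_mul, Finset.sum_ite_eq',
    Finset.mem_univ, if_true, Finset.mul_sum]

/-- The kernel `δᵢⱼ + (3α/(α+2)) xᵢxⱼ/|x|²`, homogeneous of degree zero, through which the conormal
derivative of `Φ` on spheres about the origin acts on symmetric matrices. -/
def tractionKernel (α : ℝ) (i j : Fin 3) (x : E3) : ℝ :=
  (if i = j then 1 else 0) + 3 * (α / (α + 2)) * (x i * x j * ‖x‖ ^ (-2 : ℤ))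

lemma tractionKernel_smul {r : ℝ} (hr : r ≠ 0) (x : E3) :
    tractionKernel α i j (r • x) = tractionKernel α i j x := by
  simp only [tractionKernel, PiLp.smul_apply, smul_eq_mul, norm_smul, Real.norm_eq_abs, zpow_neg,
    zpow_ofNat, mul_pow, sq_abs]
  field_simp

lemma continuousOn_tractionKernel : ContinuousOn (tractionKernel α i j) {0}ᶜ :=
  continuousOn_const.add (continuousOn_const.mul
    (((vanishesToOrder_coord i).mul (vanishesToOrder_coord j)).mul
      (vanishesToOrder_norm_zpow (-2))).contDiffOn.continuousOn)

lemma integral_sphere_tractionKernel :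
    ∫ ω : sphere (0 : E3) 1, tractionKernel α i j ω ∂volume.toSphere =
      if i = j then 4 * π * (1 + α / (α + 2)) else 0 := by
  have hint : Integrable (fun ω : sphere (0 : E3) 1 ↦ ω.1 i * ω.1 j) volume.toSphere :=
    (by fun_prop : Continuous _).integrable_of_hasCompactSupport (.of_compactSpace _)
  simp only [tractionKernel, norm_eq_of_mem_sphere, one_zpow, mul_one]
  rw [integral_add (integrable_const _) (hint.const_mul _), integral_const, integral_const_mul,
    integral_sphere_mul, toSphere_real_univ_fin_three]
  split_ifs
  · simp only [smul_eq_mul, Fintype.card_fin, Nat.cast_ofNat]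
    ring
  · simp only [smul_zero, mul_zero, add_zero]

lemma integrable_fderiv_self_mul_tractionKernel {φ : E3 → ℝ} (hφ : ContDiff ℝ 1 φ)
    (hsupp : HasCompactSupport φ) :
    Integrable fun x ↦ fderiv ℝ φ x x * ‖x‖ ^ (-3 : ℤ) * tractionKernel α i j x := by
  simpa using integrable_fderiv_self_mul_norm_zpow_mul hφ hsupp continuousOn_tractionKernel
    fun r hr ↦ tractionKernel_smul hr.ne'

lemma cA_mul_integral_fderiv_self_mul_tractionKernel {φ : E3 → ℝ} (hφ : ContDiff ℝ 1 φ)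
    (hsupp : HasCompactSupport φ) (hα : α ≠ -1) (hα' : α ≠ -2) :
    cA α * ∫ x, fderiv ℝ φ x x * ‖x‖ ^ (-3 : ℤ) * tractionKernel α i j x =
      if i = j then -φ 0 else 0 := by
  have hc : cA α * (4 * π * (1 + α / (α + 2))) = 1 := by
    have h1 : α + 1 ≠ 0 := fun h ↦ hα (by linarith)
    have h2 : α + 2 ≠ 0 := fun h ↦ hα' (by linarith)
    rw [cA]
    field_simp
    ring
  have h := integral_fderiv_self_mul_norm_zpow_mul (μ := volume) hφ hsupp
    (continuousOn_tractionKernel (α := α) (i := i) (j := j)) fun r hr ↦ tractionKernel_smul hr.ne'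
  rw [integral_sphere_tractionKernel, finrank_euclideanSpace_fin, Nat.cast_ofNat] at h
  rw [h]
  split_ifs
  · linear_combination -φ 0 * hc
  · simp only [mul_zero]

lemma sum_pd_mul_pd_Phi_of_symm {S : E3 → Fin 3 → Fin 3 → ℝ}
    (hsymm : ∀ x i j, S x i j = S x j i) (hx : x ≠ 0) :
    ∑ j, ∑ i, ∑ k, pd k (fun y ↦ S y i j) x * pd k (fun y ↦ Phi α y i j) x =
      2 * cA α * (α / (α + 2)) * ∑ j, divg (fun y i ↦ S y i j) x * (x j * ‖x‖ ^ (-3 : ℤ)) -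
        cA α * ∑ j, ∑ i,
          fderiv ℝ (fun y ↦ S y i j) x x * ‖x‖ ^ (-3 : ℤ) * tractionKernel α i j x := by
  have hpow : ‖x‖ ^ (-3 : ℤ) * ‖x‖ ^ (-2 : ℤ) = ‖x‖ ^ (-5 : ℤ) :=
    (zpow_add₀ (norm_ne_zero_iff.2 hx) _ _).symm
  have hS : ∀ k i j, pd k (fun y ↦ S y i j) x = pd k (fun y ↦ S y j i) x := fun k i j ↦ by
    simp only [hsymm _ i j]
  simp only [pd_Phi hx, tractionKernel, divg, fderiv_apply_eq_sum_pd _ x x, ← hpow,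
    Fin.sum_univ_three, hS _ 1 0, hS _ 2 0, hS _ 2 1, Fin.reduceEq, if_true, if_false]
  ring

lemma sum_stress_mul_pd_Phi_of_symm {S : E3 → Fin 3 → Fin 3 → ℝ}
    (hsymm : ∀ x i j, S x i j = S x j i) (hα : α ≠ -2) (hx : x ≠ 0) :
    ∑ j, ∑ i, ∑ k, stress α (fun y i ↦ S y i j) k i x * pd k (fun y ↦ Phi α y i j) x =
      -cA α * ∑ j, ∑ i,
        fderiv ℝ (fun y ↦ S y i j) x x * ‖x‖ ^ (-3 : ℤ) * tractionKernel α i j x := by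
  have hβ : α * (α / (α + 2) - 1) = -2 * (α / (α + 2)) := by
    have hα' : α + 2 ≠ 0 := fun h ↦ hα (by linarith)
    field_simp
    ring
  have hdiv : ∑ j, α * divg (fun y i ↦ S y i j) x *
      (cA α * (α / (α + 2) - 1) * (x j * ‖x‖ ^ (-3 : ℤ))) =
      cA α * (α * (α / (α + 2) - 1)) *
        ∑ j, divg (fun y i ↦ S y i j) x * (x j * ‖x‖ ^ (-3 : ℤ)) := by
    rw [Finset.mul_sum]
    exact Finset.sum_congr rfl fun j _ ↦ by ring
  simp only [sum_stress_mul, sum_pd_Phi hx, Finset.sum_add_distrib, hdiv, hβ]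
  rw [sum_pd_mul_pd_Phi_of_symm hsymm hx]
  ring

lemma integral_sum_stress_mul_pd_Phi_of_symm (hα : α ≠ -1) (hα' : α ≠ -2)
    {S : E3 → Fin 3 → Fin 3 → ℝ} (hS : ∀ i j, ContDiff ℝ 1 fun x ↦ S x i j)
    (hsupp : ∀ i j, HasCompactSupport fun x ↦ S x i j) (hsymm : ∀ x i j, S x i j = S x j i) :
    Integrable (fun x ↦ ∑ j, ∑ i, ∑ k,
      stress α (fun y i ↦ S y i j) k i x * pd k (fun y ↦ Phi α y i j) x) ∧
    ∫ x, ∑ j, ∑ i, ∑ k, stress α (fun y i ↦ S y i j) k i x * pd k (fun y ↦ Phi α y i j) x =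
      ∑ i, S 0 i i := by
  have hint : ∀ j, Integrable fun x ↦ ∑ i,
      fderiv ℝ (fun y ↦ S y i j) x x * ‖x‖ ^ (-3 : ℤ) * tractionKernel α i j x := fun j ↦
    integrable_finsetSum _ fun i _ ↦ integrable_fderiv_self_mul_tractionKernel (hS i j) (hsupp i j)
  have hae : (fun x ↦ ∑ j, ∑ i, ∑ k,
      stress α (fun y i ↦ S y i j) k i x * pd k (fun y ↦ Phi α y i j) x) =ᵐ[volume]
      fun x ↦ -cA α * ∑ j, ∑ i,
        fderiv ℝ (fun y ↦ S y i j) x x * ‖x‖ ^ (-3 : ℤ) * tractionKernel α i j x := by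
    filter_upwards [volume.ae_ne 0] with x hx
    exact sum_stress_mul_pd_Phi_of_symm hsymm hα' hx
  refine ⟨((integrable_finsetSum _ fun j _ ↦ hint j).const_mul _).congr hae.symm, ?_⟩
  rw [integral_congr_ae hae, integral_const_mul, integral_finsetSum _ fun j _ ↦ hint j]
  simp only [integral_finsetSum _ fun i _ ↦
    integrable_fderiv_self_mul_tractionKernel (hS i _) (hsupp i _), neg_mul, Finset.mul_sum,
    cA_mul_integral_fderiv_self_mul_tractionKernel (hS _ _) (hsupp _ _) hα hα',
    Finset.sum_ite_eq', Finset.mem_univ, if_true, Finset.sum_neg_distrib, neg_neg]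

end FundamentalSolution

section EnergyIdentity

lemma integrable_divg {X : E3 → Fin 3 → ℝ} (hX : ∀ k, VanishesToOrder (-1) fun x ↦ X x k)
    (hsupp : ∀ k, HasCompactSupport fun x ↦ X x k) : Integrable (divg X) :=
  integrable_finsetSum _ fun k _ ↦ (hX k).integrable_fderiv_apply (by simp) (hsupp k) _

lemma integral_divg_eq_zero {X : E3 → Fin 3 → ℝ} (hX : ∀ k, VanishesToOrder (-1) fun x ↦ X x k)
    (hsupp : ∀ k, HasCompactSupport fun x ↦ X x k) : ∫ x, divg X x = 0 := by
  simp only [divg, pd]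
  rw [integral_finsetSum _ fun k _ ↦ (hX k).integrable_fderiv_apply (by simp) (hsupp k) _]
  exact Finset.sum_eq_zero fun k _ ↦
    (hX k).integral_fderiv_apply_eq_zero (by simp) (by simp) (hsupp k) _

variable {α : ℝ} {i j k : Fin 3} {x : E3} {u : E3 → Fin 3 → ℝ}

/-- The density `(uⱼ∂ₖuₖ - uₖ∂ₖuⱼ) ∂ᵢΦᵢⱼ` of the antisymmetric part of the bilinear form. -/
def skewDensity (α : ℝ) (u : E3 → Fin 3 → ℝ) (x : E3) : ℝ :=
  ∑ i, ∑ j, ∑ k, (u x j * pd k (fun z ↦ u z k) x - u x k * pd k (fun z ↦ u z j) x) *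
    pd i (fun z ↦ Phi α z i j) x

/-- The density `(∂ₖuᵢ∂ₖuⱼ + α ∂ₖuₖ∂ᵢuⱼ) Φᵢⱼ` of the gradient part of the bilinear form. -/
def gradDensity (α : ℝ) (u : E3 → Fin 3 → ℝ) (x : E3) : ℝ :=
  ∑ i, ∑ j, ∑ k, (pd k (fun z ↦ u z i) x * pd k (fun z ↦ u z j) x +
    α * pd k (fun z ↦ u z k) x * pd i (fun z ↦ u z j) x) * Phi α x i j

/-- The vector field `τₖᵢΦᵢⱼuⱼ`, whose divergence is the boundary term in the energy identity. -/
def stressFlux (α : ℝ) (u : E3 → Fin 3 → ℝ) (x : E3) (k : Fin 3) : ℝ :=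
  ∑ j, ∑ i, stress α u k i x * (Phi α x i j * u x j)

lemma gradDensity_eq_sum_stress_mul :
    gradDensity α u x =
      ∑ j, ∑ i, ∑ k, stress α u k i x * (Phi α x i j * pd k (fun y ↦ u y j) x) := by
  simp only [sum_stress_mul]
  simp only [gradDensity, divg, Fin.sum_univ_three]
  ring

lemma sum_stress_mul_mul_pd_Phi (hu : DifferentiableAt ℝ u x) :
    ∑ j, ∑ i, ∑ k, stress α u k i x * (pd k (fun y ↦ Phi α y i j) x * u x j) =
      1 / 2 * ∑ j, ∑ i, ∑ k, stress α (fun y i ↦ u y i * u y j) k i x *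
        pd k (fun y ↦ Phi α y i j) x + α / 2 * skewDensity α u x := by
  have hu' := differentiableAt_pi.1 hu
  simp only [sum_stress_mul]
  simp only [skewDensity, divg, pd_mul _ (hu' _) (hu' _), Fin.sum_univ_three, Phi_comm α 1 0,
    Phi_comm α 2 0, Phi_comm α 2 1]
  ring

lemma contDiff_divg (hu : ContDiff ℝ 2 u) : ContDiff ℝ 1 (divg u) :=
  ContDiff.sum fun k _ ↦ contDiff_pd (n := 1) (contDiff_pi.1 hu k)

lemma contDiff_stress (hu : ContDiff ℝ 2 u) : ContDiff ℝ 1 (stress α u k i) := by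
  refine (contDiff_pd (n := 1) (contDiff_pi.1 hu i)).add ?_
  split_ifs
  · exact contDiff_const.mul (contDiff_divg hu)
  · exact contDiff_const

lemma lame_eq_neg_sum_pd_stress (hu : ContDiff ℝ 2 u) :
    lame α u x i = -∑ k, pd k (stress α u k i) x := by
  have hdivg := (contDiff_divg hu).differentiable one_ne_zero x
  have hstress : ∀ k, pd k (stress α u k i) x =
      pd k (pd k fun y ↦ u y i) x + if k = i then α * pd k (divg u) x else 0 := fun k ↦ by
    have hpd := (contDiff_pd (n := 1) (k := k) (contDiff_pi.1 hu i)).differentiable one_ne_zero x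
    rcases eq_or_ne k i with rfl | hki
    · rw [if_pos rfl, ← pd_const_mul k α hdivg, ← pd_add k hpd (hdivg.const_mul α)]
      exact congrArg (pd k · x) (funext fun y ↦ by rw [stress, if_pos rfl])
    · rw [if_neg hki, add_zero]
      exact congrArg (pd k · x) (funext fun y ↦ by rw [stress, if_neg hki, add_zero])
  simp only [hstress, Finset.sum_add_distrib, Finset.sum_ite_eq', Finset.mem_univ, if_true, lame,
    lap, neg_add, sub_eq_add_neg]

lemma divg_stressFlux (hu : ContDiff ℝ 2 u) (hx : x ≠ 0) :
    divg (stressFlux α u) x =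
      ∑ j, ∑ i, ∑ k, (pd k (stress α u k i) x * (Phi α x i j * u x j) +
        stress α u k i x * (pd k (fun y ↦ Phi α y i j) x * u x j) +
        stress α u k i x * (Phi α x i j * pd k (fun y ↦ u y j) x)) := by
  have hstress : ∀ k i, DifferentiableAt ℝ (stress α u k i) x := fun k i ↦
    (contDiff_stress hu).differentiable one_ne_zero x
  have hΦ : ∀ i j, DifferentiableAt ℝ (fun y ↦ Phi α y i j) x := fun i j ↦
    (vanishesToOrder_Phi α i j).differentiableAt hx
  have hu' := differentiableAt_pi.1 (hu.differentiable two_ne_zero x)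
  have hflux : ∀ k j i, DifferentiableAt ℝ
      (fun y ↦ stress α u k i y * (Phi α y i j * u y j)) x := fun k j i ↦
    (hstress k i).fun_mul ((hΦ i j).fun_mul (hu' j))
  have hpd : ∀ k j i, pd k (fun y ↦ stress α u k i y * (Phi α y i j * u y j)) x =
      pd k (stress α u k i) x * (Phi α x i j * u x j) +
        stress α u k i x * (pd k (fun y ↦ Phi α y i j) x * u x j) +
        stress α u k i x * (Phi α x i j * pd k (fun y ↦ u y j) x) := fun k j i ↦ by
    rw [pd_mul k (hstress k i) ((hΦ i j).fun_mul (hu' j)), pd_mul k (hΦ i j) (hu' j)]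
    ring
  simp only [divg, stressFlux, pd_sum _ _ fun j ↦ DifferentiableAt.fun_sum fun i _ ↦ hflux _ j i,
    pd_sum _ _ (hflux _ _), hpd]
  rw [Finset.sum_comm]
  exact Finset.sum_congr rfl fun j _ ↦ Finset.sum_comm

lemma sum_lame_mul_Phi_mul (hu : ContDiff ℝ 2 u) (hx : x ≠ 0) :
    ∑ i, ∑ j, lame α u x i * Phi α x i j * u x j =
      1 / 2 * ∑ j, ∑ i, ∑ k, stress α (fun y i ↦ u y i * u y j) k i x *
        pd k (fun y ↦ Phi α y i j) x + α / 2 * skewDensity α u x + gradDensity α u x -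
        divg (stressFlux α u) x := by
  rw [← sum_stress_mul_mul_pd_Phi (hu.differentiable two_ne_zero x), gradDensity_eq_sum_stress_mul,
    divg_stressFlux hu hx]
  simp only [lame_eq_neg_sum_pd_stress hu, Finset.sum_add_distrib, ← Finset.sum_mul]
  rw [Finset.sum_comm]
  simp only [neg_mul, Finset.sum_neg_distrib, mul_assoc]
  ring

lemma vanishesToOrder_stressFlux (hu : ContDiff ℝ 2 u) (k : Fin 3) :
    VanishesToOrder (-1) fun x ↦ stressFlux α u x k := by
  refine .sum _ fun j _ ↦ .sum _ fun i _ ↦ ?_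
  have huj := vanishesToOrder_zero_of_contDiff ((contDiff_pi.1 hu j).of_le one_le_two)
  simpa using (vanishesToOrder_zero_of_contDiff (contDiff_stress hu)).mul
    ((vanishesToOrder_Phi α i j).mul huj)

lemma hasCompactSupport_component (hu : HasCompactSupport u) (j : Fin 3) :
    HasCompactSupport fun x ↦ u x j :=
  hu.comp_left (g := fun w : Fin 3 → ℝ ↦ w j) rfl

lemma hasCompactSupport_stressFlux (hu : HasCompactSupport u) (k : Fin 3) :
    HasCompactSupport fun x ↦ stressFlux α u x k := by
  refine hu.mono fun x hx hux ↦ hx ?_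
  simp only [stressFlux, show u x = 0 from hux, Pi.zero_apply, mul_zero, Finset.sum_const_zero]

lemma integrable_gradDensity (hu : ContDiff ℝ 1 u) (hsupp : HasCompactSupport u) :
    Integrable (gradDensity α u) := by
  have hpd : ∀ k i, Continuous (pd k fun y ↦ u y i) := fun k i ↦
    (contDiff_pd (n := 0) (contDiff_pi.1 hu i)).continuous
  have hpdsupp : ∀ k i, HasCompactSupport (pd k fun y ↦ u y i) := fun k i ↦
    hasCompactSupport_pd (hasCompactSupport_component hsupp i)
  refine integrable_finsetSum _ fun i _ ↦ integrable_finsetSum _ fun j _ ↦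
    integrable_finsetSum _ fun k _ ↦ ?_
  exact LocallyIntegrable.integrable_smul_left_of_hasCompactSupport
    ((vanishesToOrder_Phi α i j).locallyIntegrable (by simp))
    (((hpd k i).mul (hpd k j)).add ((continuous_const.mul (hpd k k)).mul (hpd i j)))
    ((hpdsupp k i).mul_right.add (hpdsupp i j).mul_left)

lemma integrable_skewDensity (hu : ContDiff ℝ 1 u) (hsupp : HasCompactSupport u) :
    Integrable (skewDensity α u) := by
  have hu' : ∀ i, Continuous fun y ↦ u y i := fun i ↦ (contDiff_pi.1 hu i).continuous
  have hpd : ∀ k i, Continuous (pd k fun y ↦ u y i) := fun k i ↦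
    (contDiff_pd (n := 0) (contDiff_pi.1 hu i)).continuous
  refine integrable_finsetSum _ fun i _ ↦ integrable_finsetSum _ fun j _ ↦
    integrable_finsetSum _ fun k _ ↦ ?_
  have hsub := (hasCompactSupport_component hsupp j).mul_right (f' := pd k fun y ↦ u y k) |>.sub
    ((hasCompactSupport_component hsupp k).mul_right (f' := pd k fun y ↦ u y j))
  exact LocallyIntegrable.integrable_smul_left_of_hasCompactSupport
    ((vanishesToOrder_Phi α i j).locallyIntegrable_fderiv_apply (by simp) _)
    (((hu' j).mul (hpd k k)).sub ((hu' k).mul (hpd k j))) hsub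

lemma integral_sum_lame_mul_Phi_mul (hα : α ≠ -1) (hα' : α ≠ -2) (hu : ContDiff ℝ 2 u)
    (hsupp : HasCompactSupport u) :
    ∫ x, ∑ i, ∑ j, lame α u x i * Phi α x i j * u x j =
      1 / 2 * (∑ i, u 0 i ^ 2) + α / 2 * (∫ x, skewDensity α u x) + ∫ x, gradDensity α u x := by
  have hu' := contDiff_pi.1 (hu.of_le one_le_two)
  obtain ⟨hweakint, hweak⟩ := integral_sum_stress_mul_pd_Phi_of_symm hα hα'
    (S := fun x i j ↦ u x i * u x j) (fun i j ↦ (hu' i).mul (hu' j))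
    (fun i j ↦ (hasCompactSupport_component hsupp i).mul_right) fun x i j ↦ mul_comm _ _
  have hskew := (integrable_skewDensity (α := α) (hu.of_le one_le_two) hsupp).const_mul (α / 2)
  have hgrad := integrable_gradDensity (α := α) (hu.of_le one_le_two) hsupp
  have hflux := integrable_divg (vanishesToOrder_stressFlux (α := α) hu)
    (hasCompactSupport_stressFlux hsupp)
  rw [integral_congr_ae ((volume.ae_ne 0).mono fun x hx ↦ sum_lame_mul_Phi_mul hu hx),
    integral_sub (((hweakint.const_mul _).fun_add hskew).fun_add hgrad) hflux,
    integral_add ((hweakint.const_mul _).fun_add hskew) hgrad,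
    integral_add (hweakint.const_mul _) hskew, integral_const_mul, integral_const_mul, hweak,
    integral_divg_eq_zero (vanishesToOrder_stressFlux hu) (hasCompactSupport_stressFlux hsupp),
    sub_zero]
  simp only [sq]

end EnergyIdentity

section RadialPart

variable {α : ℝ} {x : E3} {w : Fin 3 → ℝ → ℝ} {v : E3 → Fin 3 → ℝ}

/-- The vector field `xⱼ|x|⁻³ (wⱼ(|x|) vₖ - vⱼ wₖ(|x|))`, whose divergence carries the dependence of
`skewDensity` on the radial part `w`. -/
def radialFlux (w : Fin 3 → ℝ → ℝ) (v : E3 → Fin 3 → ℝ) (x : E3) (k : Fin 3) : ℝ :=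
  ∑ j, x j * ‖x‖ ^ (-3 : ℤ) * (w j ‖x‖ * v x k - v x j * w k ‖x‖)

lemma skewDensity_eq (hx : x ≠ 0) :
    skewDensity α v x = cA α * (α / (α + 2) - 1) * ∑ j, ∑ k, x j * ‖x‖ ^ (-3 : ℤ) *
      (v x j * pd k (fun z ↦ v z k) x - v x k * pd k (fun z ↦ v z j) x) := by
  have hcomm : skewDensity α v x = ∑ j, ∑ k, (v x j * pd k (fun z ↦ v z k) x -
      v x k * pd k (fun z ↦ v z j) x) * ∑ i, pd i (fun z ↦ Phi α z i j) x := by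
    simp only [Finset.mul_sum]
    rw [skewDensity, Finset.sum_comm]
    exact Finset.sum_congr rfl fun j _ ↦ Finset.sum_comm
  simp only [hcomm, sum_pd_Phi hx, Finset.mul_sum]
  exact Finset.sum_congr rfl fun j _ ↦ Finset.sum_congr rfl fun k _ ↦ by ring

lemma pd_coord_mul_norm_zpow (j k : Fin 3) (n : ℤ) (hx : x ≠ 0) :
    pd k (fun y ↦ y j * ‖y‖ ^ n) x =
      (if j = k then 1 else 0) * ‖x‖ ^ n + n * (x j * x k) * ‖x‖ ^ (n - 2) := by
  rw [pd_mul k ((vanishesToOrder_coord j).differentiableAt hx)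
    ((vanishesToOrder_norm_zpow n).differentiableAt hx), pd_coord, pd_norm_zpow n hx]
  ring

lemma divg_radialFlux (hw : ∀ j, DifferentiableAt ℝ (fun y : E3 ↦ w j ‖y‖) x)
    (hv : ∀ j, DifferentiableAt ℝ (fun y ↦ v y j) x) (hx : x ≠ 0) :
    divg (radialFlux w v) x = ∑ k, ∑ j,
      (((if j = k then 1 else 0) * ‖x‖ ^ (-3 : ℤ) - 3 * (x j * x k) * ‖x‖ ^ (-5 : ℤ)) *
          (w j ‖x‖ * v x k - v x j * w k ‖x‖) +
        x j * ‖x‖ ^ (-3 : ℤ) *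
          (pd k (fun y ↦ w j ‖y‖) x * v x k + w j ‖x‖ * pd k (fun y ↦ v y k) x -
            (pd k (fun y ↦ v y j) x * w k ‖x‖ + v x j * pd k (fun y ↦ w k ‖y‖) x))) := by
  have hker : ∀ j, DifferentiableAt ℝ (fun y : E3 ↦ y j * ‖y‖ ^ (-3 : ℤ)) x := fun j ↦
    ((vanishesToOrder_coord j).mul (vanishesToOrder_norm_zpow _)).differentiableAt hx
  have hwv : ∀ j k, DifferentiableAt ℝ (fun y ↦ w j ‖y‖ * v y k) x := fun j k ↦
    (hw j).fun_mul (hv k)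
  have hvw : ∀ j k, DifferentiableAt ℝ (fun y ↦ v y j * w k ‖y‖) x := fun j k ↦
    (hv j).fun_mul (hw k)
  have hskew : ∀ j k, DifferentiableAt ℝ (fun y ↦ w j ‖y‖ * v y k - v y j * w k ‖y‖) x :=
    fun j k ↦ (hwv j k).fun_sub (hvw j k)
  simp only [divg, radialFlux, pd_sum _ _ fun j ↦ (hker j).fun_mul (hskew j _),
    pd_mul _ (hker _) (hskew _ _), pd_coord_mul_norm_zpow _ _ _ hx, pd_sub _ (hwv _ _) (hvw _ _),
    pd_mul _ (hw _) (hv _), pd_mul _ (hv _) (hw _)]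
  norm_num [sub_eq_add_neg]

lemma skewDensity_radial_add (hw : ∀ j, Differentiable ℝ (w j))
    (hv : ∀ j, DifferentiableAt ℝ (fun y ↦ v y j) x) (hx : x ≠ 0) :
    skewDensity α (fun y j ↦ w j ‖y‖ + v y j) x =
      skewDensity α v x + cA α * (α / (α + 2) - 1) * divg (radialFlux w v) x := by
  have hwx : ∀ j, DifferentiableAt ℝ (fun y : E3 ↦ w j ‖y‖) x := fun j ↦
    (hw j ‖x‖).comp x (hasFDerivAt_norm hx).differentiableAt
  have hpdw : ∀ j k, pd k (fun y : E3 ↦ w j ‖y‖) x = deriv (w j) ‖x‖ * (x k / ‖x‖) := fun j k ↦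
    pd_comp_norm hx (hw j _).hasDerivAt
  rw [divg_radialFlux hwx hv hx, skewDensity_eq hx, skewDensity_eq hx]
  simp only [pd_add _ (hwx _) (hv _), hpdw, Fin.sum_univ_three, Fin.reduceEq, if_true, if_false]
  ring

lemma vanishesToOrder_radialFlux (hw : ∀ j, ContDiff ℝ 1 (w j))
    (hv : ∀ j, VanishesToOrder 1 fun x ↦ v x j) (k : Fin 3) :
    VanishesToOrder (-1) fun x ↦ radialFlux w v x k := by
  have hwv : ∀ j k, VanishesToOrder 1 fun x ↦ w j ‖x‖ * v x k := fun j k ↦ by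
    simpa using ((vanishesToOrder_norm_zpow 1).zero_of_contDiff_comp (hw j)).mul (hv k)
  refine .sum _ fun j _ ↦ ?_
  exact ((vanishesToOrder_coord j).mul (vanishesToOrder_norm_zpow (-3))).mul
    ((hwv j k).sub (by simpa only [mul_comm] using hwv k j))

lemma hasCompactSupport_radialFlux (hv : ∀ j, HasCompactSupport fun x ↦ v x j) (k : Fin 3) :
    HasCompactSupport fun x ↦ radialFlux w v x k := by
  have hv' : HasCompactSupport v := HasCompactSupport.of_support_subset_isCompact
    (isCompact_iUnion hv) fun x hx ↦ by
      obtain ⟨j, hj⟩ := Function.ne_iff.1 hx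
      exact mem_iUnion.2 ⟨j, subset_tsupport _ hj⟩
  refine hv'.mono fun x hx hvx ↦ hx ?_
  simp only [radialFlux, show v x = 0 from hvx, Pi.zero_apply, mul_zero, zero_mul, sub_zero,
    Finset.sum_const_zero]

lemma integral_skewDensity_radial_add (hw : ∀ j, ContDiff ℝ 1 (w j))
    (hv : ∀ j, VanishesToOrder 1 fun x ↦ v x j) (hsupp : ∀ j, HasCompactSupport fun x ↦ v x j)
    (hint : Integrable (skewDensity α fun x j ↦ w j ‖x‖ + v x j)) :
    ∫ x, skewDensity α (fun y j ↦ w j ‖y‖ + v y j) x = ∫ x, skewDensity α v x := by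
  have hflux := vanishesToOrder_radialFlux hw hv
  have hfluxsupp := hasCompactSupport_radialFlux (w := w) hsupp
  have heq : skewDensity α v =ᵐ[volume] fun x ↦ skewDensity α (fun y j ↦ w j ‖y‖ + v y j) x -
      cA α * (α / (α + 2) - 1) * divg (radialFlux w v) x :=
    (volume.ae_ne 0).mono fun x hx ↦ eq_sub_of_add_eq (skewDensity_radial_add
      (fun j ↦ (hw j).differentiable one_ne_zero) (fun j ↦ (hv j).differentiableAt hx) hx).symm
  rw [integral_congr_ae heq, integral_sub hint ((integrable_divg hflux hfluxsupp).const_mul _),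
    integral_const_mul, integral_divg_eq_zero hflux hfluxsupp, mul_zero, sub_zero]

end RadialPart

section SphericalMeanDecomposition

namespace IsSphericalMeanDecomp

variable {u : E3 → Fin 3 → ℝ} {ub : Fin 3 → ℝ → ℝ} {v : E3 → Fin 3 → ℝ}

lemma mean_eq (hdec : IsSphericalMeanDecomp u ub v) (i : Fin 3) (r : ℝ) :
    ub i r = 1 / (4 * π) * ∫ ω : sphere (0 : E3) 1, u (r • (ω : E3)) i ∂volume.toSphere :=
  hdec.1 i r

lemma eq_radial_add (hdec : IsSphericalMeanDecomp u ub v) : u = fun x i ↦ ub i ‖x‖ + v x i :=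
  funext₂ hdec.2

lemma contDiff_mean (hdec : IsSphericalMeanDecomp u ub v) (hu : ContDiff ℝ 1 u) (i : Fin 3) :
    ContDiff ℝ 1 (ub i) := by
  rw [funext (hdec.mean_eq i)]
  exact contDiff_const.mul (contDiff_one_integral_sphere (contDiff_pi.1 hu i))

lemma mean_zero (hdec : IsSphericalMeanDecomp u ub v) (i : Fin 3) : ub i 0 = u 0 i := by
  simp only [hdec.mean_eq, zero_smul, integral_const, toSphere_real_univ_fin_three, smul_eq_mul]
  field_simp

lemma hasCompactSupport_mean_comp_norm (hdec : IsSphericalMeanDecomp u ub v)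
    (hu : HasCompactSupport u) (i : Fin 3) :
    HasCompactSupport fun x : E3 ↦ ub i ‖x‖ := by
  simp only [hdec.mean_eq]
  exact (hasCompactSupport_integral_sphere_comp_norm (hasCompactSupport_component hu i)).mul_left

lemma hasCompactSupport_meanfree (hdec : IsSphericalMeanDecomp u ub v) (hu : HasCompactSupport u)
    (i : Fin 3) :
    HasCompactSupport fun x ↦ v x i := by
  have hv : (fun x ↦ v x i) = fun x ↦ u x i - ub i ‖x‖ :=
    funext fun x ↦ eq_sub_of_add_eq' (hdec.2 x i).symm
  rw [hv]
  exact (hasCompactSupport_component hu i).sub (hdec.hasCompactSupport_mean_comp_norm hu i)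

lemma vanishesToOrder_meanfree (hdec : IsSphericalMeanDecomp u ub v) (hu : ContDiff ℝ 1 u)
    (i : Fin 3) :
    VanishesToOrder 1 fun x ↦ v x i := by
  have hv : (fun x ↦ v x i) = fun x ↦ (u x i - u 0 i) - (ub i ‖x‖ - ub i 0) := funext fun x ↦ by
    rw [hdec.2 x i, hdec.mean_zero]
    ring
  have hsub : VanishesToOrder 1 fun x ↦ u x i - u 0 i :=
    VanishesToOrder.id.comp one_pos ((contDiff_pi.1 hu i).sub contDiff_const) (sub_self _)
  have hmean : VanishesToOrder 1 fun x : E3 ↦ ub i ‖x‖ - ub i 0 := by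
    simpa only [zpow_one] using (vanishesToOrder_norm_zpow (E := E3) 1).comp one_pos
      ((hdec.contDiff_mean hu i).sub contDiff_const) (sub_self _)
  rw [hv]
  exact hsub.sub hmean

end IsSphericalMeanDecomp

end SphericalMeanDecomposition

theorem lame_energy_eq_half_sq_add_bilinear_meanfree_general
    {α : ℝ} (hα : α ≠ -1) (hα' : α ≠ -2) {u : E3 → Fin 3 → ℝ} (hu : ContDiff ℝ 2 u)
    (hsupp : HasCompactSupport u) {ub : Fin 3 → ℝ → ℝ} {v : E3 → Fin 3 → ℝ}
    (hdec : IsSphericalMeanDecomp u ub v) :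
    ∫ x, ∑ i, ∑ j, lame α u x i * Phi α x i j * u x j =
      1 / 2 * (∑ i, u 0 i ^ 2) + α / 2 * (∫ x, skewDensity α v x) + ∫ x, gradDensity α u x := by
  have hu₁ : ContDiff ℝ 1 u := hu.of_le one_le_two
  have hskew : ∫ x, skewDensity α u x = ∫ x, skewDensity α v x := by
    have hint := integrable_skewDensity (α := α) hu₁ hsupp
    rw [hdec.eq_radial_add] at hint ⊢
    exact integral_skewDensity_radial_add (hdec.contDiff_mean hu₁)
      (hdec.vanishesToOrder_meanfree hu₁) (hdec.hasCompactSupport_meanfree hsupp) hint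
  rw [integral_sum_lame_mul_Phi_mul hα hα' hu hsupp, hskew]

/-- With the spherical-mean decomposition `u = ū + v`,
`∫ (Lu)·(Φu) dx = (1/2)|u(0)|² + B*(u,u)`, where in the antisymmetric part of the bilinear
form `u` is replaced by its mean-free part `v`. -/
theorem lame_energy_eq_half_sq_add_bilinear_meanfree
    (α : ℝ) (hα : -1 < α)
    (u : E3 → Fin 3 → ℝ) (hu : IsTestOn Set.univ u)
    (ub : Fin 3 → ℝ → ℝ) (v : E3 → Fin 3 → ℝ)
    (hdec : IsSphericalMeanDecomp u ub v) :
    ∫ x : E3, ∑ i, ∑ j, lame α u x i * Phi α x i j * u x j =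
      (1 / 2) * (∑ i, (u 0 i) ^ 2) +
      ((α / 2) * ∫ x : E3, ∑ i, ∑ j, ∑ k,
          (v x j * pd k (fun z => v z k) x - v x k * pd k (fun z => v z j) x) *
            pd i (fun z => Phi α z i j) x) +
      (∫ x : E3, ∑ i, ∑ j, ∑ k,
          (pd k (fun z => u z i) x * pd k (fun z => u z j) x +
            α * pd k (fun z => u z k) x * pd i (fun z => u z j) x) * Phi α x i j) :=
  lame_energy_eq_half_sq_add_bilinear_meanfree_general hα.ne' (by linarith)
    (hu.1.of_le (WithTop.coe_le_coe.2 le_top)) hu.2.1 hdec
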